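/- Let L be a finite semidistributive lattice. Then for every x ∈ L there exists a unique y ∈ L such that the set of join-irreducible labels of coverings x ⋗ x' (over all x' covered by x) equals the set of join-irreducible labels of coverings y' ⋗ y (over all y' covering y); moreover this unique y equals κ̄(x) := ⨅{ κ(j) | j ∈ CJR(x) }. Furthermore, the map κ̄ : L → L is a bijection. -/

import Mathlib

/-- A canonical join representation: `x = ⨆ A`, `A` is an antichain, and `A`
refines every join representation of `x`. -/
def IsCanonicalJoinRep {α : Type*} [CompleteLattice α] (x : α) (A : Set α) : Prop :=
  sSup A = x ∧ IsAntichain (· ≤ ·) A ∧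
    ∀ B : Set α, sSup B = x → ∀ a ∈ A, ∃ b ∈ B, a ≤ b

/-- The set of join-irreducible labels of the coverings `x ⋗ x'` below `x`:
the label of a covering `x ⋗ x'` is the minimum of `{z | x' ⊔ z = x}`. -/
def downLabels {α : Type*} [CompleteLattice α] (x : α) : Set α :=
  {j : α | ∃ x' : α, x' ⋖ x ∧ IsLeast {z : α | x' ⊔ z = x} j}

/-- The set of join-irreducible labels of the coverings `y' ⋗ y` above `y`. -/
def upLabels {α : Type*} [CompleteLattice α] (y : α) : Set α :=
  {j : α | ∃ y' : α, y ⋖ y' ∧ IsLeast {z : α | y ⊔ z = y'} j}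

section SemidistributiveLabels

variable {α : Type*} [CompleteLattice α]

theorem isLeast_sup_eq_of_joinSemidistrib
    (hSDj : ∀ (a b : α) (X : Set α), X.Nonempty → (∀ x ∈ X, a ⊔ x = b) → a ⊔ sInf X = b)
    {a b : α} (hab : a ≤ b) :
    IsLeast {z : α | a ⊔ z = b} (sInf {z : α | a ⊔ z = b}) :=
  ⟨hSDj a b _ ⟨b, sup_eq_right.2 hab⟩ fun _ hx => hx, fun _ hz => sInf_le hz⟩

theorem not_le_of_isLeast_label {a b j : α} (hab : a ⋖ b)
    (hj : IsLeast {z : α | a ⊔ z = b} j) : ¬ j ≤ a := fun h =>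
  hab.lt.ne ((sup_eq_left.2 h).symm.trans hj.1)

theorem le_of_isLeast_label {a b j : α} (hj : IsLeast {z : α | a ⊔ z = b} j) : j ≤ b :=
  le_sup_right.trans_eq hj.1

theorem sup_eq_of_covBy_of_not_le {a b z : α} (hab : a ⋖ b) (hz : z ≤ b) (hza : ¬ z ≤ a) :
    a ⊔ z = b :=
  (hab.eq_or_eq le_sup_left (sup_le hab.le hz)).resolve_left fun h => hza (sup_eq_left.1 h)

theorem sSup_Iio_le_of_isLeast_label {a b j : α} (hab : a ⋖ b)
    (hj : IsLeast {z : α | a ⊔ z = b} j) : sSup {y : α | y < j} ≤ a := by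
  refine sSup_le fun y (hy : y < j) => ?_
  by_contra hya
  exact hy.not_ge (hj.2 (sup_eq_of_covBy_of_not_le hab (hy.le.trans (le_of_isLeast_label hj)) hya))

theorem ne_sSup_Iio_of_isLeast_label {a b j : α} (hab : a ⋖ b)
    (hj : IsLeast {z : α | a ⊔ z = b} j) : j ≠ sSup {y : α | y < j} := fun h =>
  not_le_of_isLeast_label hab hj (h.le.trans (sSup_Iio_le_of_isLeast_label hab hj))

theorem sSup_Iio_le (j : α) : sSup {y : α | y < j} ≤ j :=
  sSup_le fun _ hy => le_of_lt hy

theorem inf_eq_sSup_Iio_of_isLeast_label {a b j : α} (hab : a ⋖ b)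
    (hj : IsLeast {z : α | a ⊔ z = b} j) : j ⊓ a = sSup {y : α | y < j} :=
  le_antisymm (le_sSup (inf_lt_left.2 (not_le_of_isLeast_label hab hj)))
    (le_inf (sSup_Iio_le j) (sSup_Iio_le_of_isLeast_label hab hj))

theorem not_le_of_inf_eq_sSup_Iio {j k : α} (hj : j ≠ sSup {y : α | y < j})
    (hk : j ⊓ k = sSup {y : α | y < j}) : ¬ j ≤ k := fun h =>
  hj ((inf_eq_left.2 h).symm.trans hk)

/-- The canonical joinands of `x` are the labels of the coverings below `x`. -/
theorem IsCanonicalJoinRep.eq_downLabels [Finite α]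
    (hSDj : ∀ (a b : α) (X : Set α), X.Nonempty → (∀ x ∈ X, a ⊔ x = b) → a ⊔ sInf X = b)
    {x : α} {A : Set α} (hA : IsCanonicalJoinRep x A) : downLabels x = A := by
  obtain ⟨hsup, hanti, href⟩ := hA
  have hsub : ∀ {x' j : α}, x' ⋖ x → IsLeast {z : α | x' ⊔ z = x} j → j ∈ A := by
    intro x' j hx' hj
    obtain ⟨a, ha, hax'⟩ : ∃ a ∈ A, ¬ a ≤ x' := by
      by_contra! h
      exact hx'.lt.not_ge (hsup ▸ sSup_le h)
    obtain ⟨b, hb, hab⟩ := href {x', j} (by rw [sSup_pair]; exact hj.1) a ha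
    rcases hb with rfl | rfl
    · exact absurd hab hax'
    · have hba := hj.2 (sup_eq_of_covBy_of_not_le hx' (hsup ▸ le_sSup ha) hax')
      exact le_antisymm hba hab ▸ ha
  refine Set.Subset.antisymm (fun j ⟨x', hx', hj⟩ => hsub hx' hj) fun a ha => ?_
  have hlt : sSup (A \ {a}) < x := by
    refine lt_of_le_of_ne (hsup ▸ sSup_le_sSup Set.sdiff_subset) fun h => ?_
    obtain ⟨b, hb, hab⟩ := href _ h a ha
    exact hb.2 (hanti.eq ha hb.1 hab).symm
  obtain ⟨x', hle, hx'⟩ := exists_le_covBy_of_lt hlt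
  have hj := isLeast_sup_eq_of_joinSemidistrib hSDj hx'.le
  refine ⟨x', hx', ?_⟩
  convert hj
  by_contra hne
  exact not_le_of_isLeast_label hx' hj
    ((le_sSup (s := A \ {a}) ⟨hsub hx' hj, fun h => hne h.symm⟩).trans hle)

/-- If `j` labels `a ⋖ b`, then `κ j` is the dual, meet-irreducible label of `a ⋖ b`. -/
theorem isGreatest_kappa_of_isLeast_label {κ : α → α}
    (hκ : ∀ j : α, j ≠ sSup {y : α | y < j} →
      IsGreatest {z : α | j ⊓ z = sSup {y : α | y < j}} (κ j))
    {a b j : α} (hab : a ⋖ b) (hj : IsLeast {z : α | a ⊔ z = b} j) :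
    IsGreatest {z : α | b ⊓ z = a} (κ j) := by
  have hne := ne_sSup_Iio_of_isLeast_label hab hj
  have hle : a ≤ κ j := (hκ j hne).2 (inf_eq_sSup_Iio_of_isLeast_label hab hj)
  refine ⟨?_, fun m (hm : b ⊓ m = a) => (hκ j hne).2 ?_⟩
  · refine (hab.eq_or_eq (le_inf hab.le hle) inf_le_left).resolve_right fun h => ?_
    exact not_le_of_inf_eq_sSup_Iio hne (hκ j hne).1
      ((le_of_isLeast_label hj).trans (inf_eq_left.1 h))
  · change j ⊓ m = _
    rw [← inf_eq_sSup_Iio_of_isLeast_label hab hj, ← hm, ← inf_assoc,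
      inf_eq_left.2 (le_of_isLeast_label hj)]

theorem sInf_kappa_upLabels [Finite α]
    (hSDj : ∀ (a b : α) (X : Set α), X.Nonempty → (∀ x ∈ X, a ⊔ x = b) → a ⊔ sInf X = b)
    {κ : α → α}
    (hκ : ∀ j : α, j ≠ sSup {y : α | y < j} →
      IsGreatest {z : α | j ⊓ z = sSup {y : α | y < j}} (κ j))
    (y : α) : sInf (κ '' upLabels y) = y := by
  refine (eq_of_le_of_not_lt (le_sInf ?_) fun hlt => ?_).symm
  · rintro _ ⟨j, ⟨y', hy', hj⟩, rfl⟩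
    exact inf_le_right.trans' (isGreatest_kappa_of_isLeast_label hκ hy' hj).1.ge
  · obtain ⟨y', hy', hle⟩ := exists_covBy_le_of_lt hlt
    have hj := isLeast_sup_eq_of_joinSemidistrib hSDj hy'.le
    have hk := (isGreatest_kappa_of_isLeast_label hκ hy' hj).1
    have hle' : y' ≤ κ _ := hle.trans (sInf_le ⟨_, ⟨y', hy', hj⟩, rfl⟩)
    exact hy'.lt.ne (hk.symm.trans (inf_eq_left.2 hle'))

theorem le_kappa_of_mem_upLabels_of_ne
    (hSDm : ∀ (a b : α) (X : Set α), X.Nonempty → (∀ x ∈ X, a ⊓ x = b) → a ⊓ sSup X = b)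
    {κ : α → α}
    (hκ : ∀ j : α, j ≠ sSup {y : α | y < j} →
      IsGreatest {z : α | j ⊓ z = sSup {y : α | y < j}} (κ j))
    {y i j : α} (hi : i ∈ upLabels y) (hj : j ∈ upLabels y) (hij : i ≠ j) : i ≤ κ j := by
  obtain ⟨yi, hyi, hli⟩ := hi
  obtain ⟨yj, hyj, hlj⟩ := hj
  have hne : yj ≠ yi := by
    rintro rfl
    exact hij (hli.unique hlj)
  have hinf : yj ⊓ yi = y := by
    refine (hyj.eq_or_eq (le_inf hyj.le hyi.le) inf_le_left).resolve_right fun h => ?_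
    exact hne ((hyi.eq_or_eq hyj.le (inf_eq_left.1 h)).resolve_left hyj.lt.ne')
  have hk := isGreatest_kappa_of_isLeast_label hκ hyj hlj
  have hpair : yj ⊓ sSup {κ j, yi} = y := by
    refine hSDm _ _ _ ⟨yi, by simp⟩ ?_
    rintro z (rfl | rfl)
    exacts [hk.1, hinf]
  exact ((le_of_isLeast_label hli).trans (le_sSup (by simp))).trans (hk.2 hpair)

theorem downLabels_sSup_upLabels [Finite α]
    (hSDj : ∀ (a b : α) (X : Set α), X.Nonempty → (∀ x ∈ X, a ⊔ x = b) → a ⊔ sInf X = b)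
    (hSDm : ∀ (a b : α) (X : Set α), X.Nonempty → (∀ x ∈ X, a ⊓ x = b) → a ⊓ sSup X = b)
    {κ : α → α}
    (hκ : ∀ j : α, j ≠ sSup {y : α | y < j} →
      IsGreatest {z : α | j ⊓ z = sSup {y : α | y < j}} (κ j))
    {y : α} {A : Set α} (hA : IsCanonicalJoinRep (sSup (upLabels y)) A) :
    downLabels (sSup (upLabels y)) = upLabels y := by
  have hdown := hA.eq_downLabels hSDj
  have hsub : upLabels y ⊆ downLabels (sSup (upLabels y)) := by
    intro j hj
    obtain ⟨y', hy', hlj⟩ := id hj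
    have hne := ne_sSup_Iio_of_isLeast_label hy' hlj
    have hk : j ⊓ κ j = sSup {z : α | z < j} := (hκ j hne).1
    have hnot := not_le_of_inf_eq_sSup_Iio hne hk
    have hjx : j ≤ sSup (upLabels y) := le_sSup hj
    have hlt : κ j ⊓ sSup (upLabels y) < sSup (upLabels y) :=
      inf_lt_right.2 fun h => hnot (hjx.trans h)
    obtain ⟨x', hle, hx'⟩ := exists_le_covBy_of_lt hlt
    have hjx' : ¬ j ≤ x' := by
      intro h
      refine hx'.lt.not_ge (sSup_le fun i hi => ?_)
      rcases eq_or_ne i j with rfl | hij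
      · exact h
      · exact (le_inf (le_kappa_of_mem_upLabels_of_ne hSDm hκ hi hj hij) (le_sSup hi)).trans hle
    have hl := isLeast_sup_eq_of_joinSemidistrib hSDj hx'.le
    refine ⟨x', hx', ?_⟩
    convert hl
    refine (eq_of_le_of_not_lt (hl.2 (sup_eq_of_covBy_of_not_le hx' hjx hjx')) fun h => ?_).symm
    refine not_le_of_isLeast_label hx' hl (hle.trans' (le_inf ?_ (h.le.trans hjx)))
    exact (le_sSup (s := {z : α | z < j}) h).trans (hk.ge.trans inf_le_right)
  refine Set.Subset.antisymm (fun a ha => ?_) hsub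
  rw [hdown] at ha hsub
  obtain ⟨u, hu, hau⟩ := hA.2.2 _ rfl a ha
  exact hA.2.1.eq ha (hsub hu) hau ▸ hu

end SemidistributiveLabels

/-- Let `L` be a finite semidistributive lattice, `κ` the kappa map
(for join-irreducible `j`, `κ j` is the greatest element of `{z | j ⊓ z = j_*}`),
and `CJR x` the canonical join representation of `x` (it exists since `L` is a
finite semidistributive lattice). Set `κ̄ x := ⨅ (κ '' CJR x)`. Then for every `x`
there is a unique `y` with `downLabels x = upLabels y`, this `y` equals `κ̄ x`, and
`κ̄ : L → L` is a bijection. -/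
theorem stmt_17 {α : Type*} [CompleteLattice α] [Finite α]
    (hSDj : ∀ (a b : α) (X : Set α), X.Nonempty → (∀ x ∈ X, a ⊔ x = b) → a ⊔ sInf X = b)
    (hSDm : ∀ (a b : α) (X : Set α), X.Nonempty → (∀ x ∈ X, a ⊓ x = b) → a ⊓ sSup X = b)
    (κ : α → α)
    (hκ : ∀ j : α, j ≠ sSup {y : α | y < j} →
      IsGreatest {z : α | j ⊓ z = sSup {y : α | y < j}} (κ j))
    (CJR : α → Set α) (hCJR : ∀ x : α, IsCanonicalJoinRep x (CJR x)) :
    (∀ x : α, downLabels x = upLabels (sInf (κ '' CJR x)) ∧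
      ∀ y : α, downLabels x = upLabels y → y = sInf (κ '' CJR x)) ∧
    Function.Bijective (fun x : α => sInf (κ '' CJR x)) := by
  have hdown : ∀ x, downLabels x = CJR x := fun x => (hCJR x).eq_downLabels hSDj
  have hup : ∀ y, sInf (κ '' upLabels y) = y := sInf_kappa_upLabels hSDj hκ
  have hsurj : Function.Surjective fun y : α => sSup (upLabels y) := by
    refine Finite.surjective_of_injective fun y z (hyz : sSup _ = sSup _) => ?_
    have h := downLabels_sSup_upLabels hSDj hSDm hκ (hCJR (sSup (upLabels y)))
    rw [hyz, downLabels_sSup_upLabels hSDj hSDm hκ (hCJR (sSup (upLabels z)))] at h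
    rw [← hup y, ← hup z, h]
  have hlabels : ∀ x, downLabels x = upLabels (sInf (κ '' CJR x)) := by
    intro x
    obtain ⟨y, rfl⟩ := hsurj x
    simp only [← hdown, downLabels_sSup_upLabels hSDj hSDm hκ (hCJR (sSup (upLabels y))), hup]
  refine ⟨fun x => ⟨hlabels x, fun y hy => ?_⟩, Finite.injective_iff_bijective.1 ?_⟩
  · rw [← hdown, hy, hup]
  · intro x z (hxz : sInf _ = sInf _)
    rw [← (hCJR x).1, ← (hCJR z).1, ← hdown x, ← hdown z, hlabels x, hlabels z, hxz]
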